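/- arXiv:2012.14525 — 3 statements merged into one kernel-verified Lean document; each statement's English description precedes it below -/
import Mathlib

section
/- Suppose the Assumptions hold, d₁ = d₂, and (r,s) is a red arrow with ⟨r,s⟩ = ⟨a,d₁⟩. Then there exists r' ∈ X with r' ≠ r such that {r,r'} is an increasing pair and (r',s) is a red arrow. -/
noncomputable section
open Classical

/-- The L1 (Manhattan) metric on ℝ². -/
def rho (u v : ℝ × ℝ) : ℝ := |u.1 - v.1| + |u.2 - v.2|

/-- `z` is between `u` and `v` (w.r.t. the L1 metric): the three points are
pairwise distinct and `ρ(u,v) = ρ(u,z) + ρ(z,v)`. -/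
def MBtw (u z v : ℝ × ℝ) : Prop :=
  u ≠ z ∧ z ≠ v ∧ u ≠ v ∧ rho u v = rho u z + rho z v

/-- The line of `X` induced by distinct points `u, v`. -/
def lineThrough (X : Finset (ℝ × ℝ)) (u v : ℝ × ℝ) : Finset (ℝ × ℝ) :=
  X.filter fun z => z = u ∨ z = v ∨ MBtw u z v ∨ MBtw z u v ∨ MBtw u v z

/-- `X` is non-collinear: no line induced by two distinct points of `X` equals `X`. -/
def NonCollinear (X : Finset (ℝ × ℝ)) : Prop :=
  ∀ u ∈ X, ∀ v ∈ X, u ≠ v → lineThrough X u v ≠ X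

/-- `{p,q}` is an increasing pair. -/
def IncPair (p q : ℝ × ℝ) : Prop := 0 < (q.1 - p.1) * (q.2 - p.2)

/-- `{p,q}` is a decreasing pair. -/
def DecPair (p q : ℝ × ℝ) : Prop := (q.1 - p.1) * (q.2 - p.2) < 0

/-- The partial order `≤_I`. -/
def leI (c d : ℝ × ℝ) : Prop := c.1 ≤ d.1 ∧ c.2 ≤ d.2

/-- `c <_I d`. -/
def ltI (c d : ℝ × ℝ) : Prop := leI c d ∧ c ≠ d

/-- The partial order `≤_D`. -/
def leD (c d : ℝ × ℝ) : Prop := c.1 ≤ d.1 ∧ d.2 ≤ c.2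

/-- `c <_D d`. -/
def ltD (c d : ℝ × ℝ) : Prop := leD c d ∧ c ≠ d

/-- `(p,q)` is a blue arrow of `X`. -/
def BlueArrow (X : Finset (ℝ × ℝ)) (p q : ℝ × ℝ) : Prop :=
  p ∈ X ∧ q ∈ X ∧ IncPair p q ∧ ltI p q ∧
  ∀ a b, a ∈ X → b ∈ X → IncPair a b → ltI a b →
    lineThrough X a b = lineThrough X p q → (ltI q b ∨ (q = b ∧ leI a p))

/-- `(p,q)` is a red arrow of `X`. -/
def RedArrow (X : Finset (ℝ × ℝ)) (p q : ℝ × ℝ) : Prop :=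
  p ∈ X ∧ q ∈ X ∧ DecPair p q ∧ ltD p q ∧
  ∀ a b, a ∈ X → b ∈ X → DecPair a b → ltD a b →
    lineThrough X a b = lineThrough X p q → (ltD q b ∨ (q = b ∧ leD a p))

/-- An arrow is a blue or a red arrow. -/
def Arrow (X : Finset (ℝ × ℝ)) (p q : ℝ × ℝ) : Prop :=
  BlueArrow X p q ∨ RedArrow X p q

/-- `a` is not an endpoint of any arrow of `X`. -/
def NotEndpoint (X : Finset (ℝ × ℝ)) (a : ℝ × ℝ) : Prop :=
  ∀ p q, Arrow X p q → a ≠ p ∧ a ≠ q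

/-!
The line through two points one of which lies in the fourth quadrant of the other consists of the
points `≤_D`-comparable with both, and the hypotheses on `d = d₁ = d₂` say that `d` is the
`≤_D`-least point of `X` in the fourth quadrant of `a`. Non-collinearity rules out `s = d`; then, as
the second quadrant of `a` is empty, `a` is a corner of the bounding rectangle of `r` and `s`.
Reflecting in the antidiagonal we may take `a = (s.1, r.2)`. Equality of the lines `⟨r, s⟩` and
`⟨a, d⟩` empties the rectangle, so non-collinearity yields a point `b` below it (from its top side)
and points to the left of it, at heights strictly between `s` and `r` (from its right side). Let
`r'` be a `≤_D`-maximal point of the latter kind. The point `b` is not on `⟨r', s⟩`, but it is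
comparable with both points of any pair inducing that line that would prevent `(r', s)` from being
an arrow.
-/

section Betweenness

theorem abs_sub_eq_add_iff_mem_uIcc {α : Type*} [AddCommGroup α] [LinearOrder α]
    [IsOrderedAddMonoid α] {u z v : α} : |u - v| = |u - z| + |z - v| ↔ z ∈ Set.uIcc u v := by
  rw [← sub_add_sub_cancel u z v, abs_add_eq_add_abs_iff, Set.mem_uIcc]
  simp only [sub_nonneg, sub_nonpos]
  tauto

theorem rho_eq_add_iff_mem_uIcc {u z v : ℝ × ℝ} :
    rho u v = rho u z + rho z v ↔ z ∈ Set.uIcc u v := by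
  rw [Set.uIcc_prod_eq, Set.mem_prod, ← abs_sub_eq_add_iff_mem_uIcc, ← abs_sub_eq_add_iff_mem_uIcc]
  have h₁ := abs_sub_le u.1 z.1 v.1
  have h₂ := abs_sub_le u.2 z.2 v.2
  unfold rho
  constructor
  · intro h
    constructor <;> linarith
  · rintro ⟨h, h'⟩
    linarith

theorem mem_lineThrough_iff {X : Finset (ℝ × ℝ)} {u v z : ℝ × ℝ} (huv : u ≠ v) :
    z ∈ lineThrough X u v ↔
      z ∈ X ∧ (z ∈ Set.uIcc u v ∨ u ∈ Set.uIcc z v ∨ v ∈ Set.uIcc u z) := by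
  simp only [lineThrough, Finset.mem_filter, MBtw, rho_eq_add_iff_mem_uIcc]
  refine and_congr_right fun _ => ?_
  by_cases hzu : z = u
  · simp [hzu]
  by_cases hzv : z = v
  · simp [hzv]
  grind

end Betweenness

section StrictOrder

/-- The strict form of `≤_D`: `d` lies in the fourth quadrant of `c`, or equivalently `c` lies in
the second quadrant of `d`. -/
def sltD (c d : ℝ × ℝ) : Prop := c.1 < d.1 ∧ d.2 < c.2

theorem decPair_and_ltD_iff_sltD {p q : ℝ × ℝ} : DecPair p q ∧ ltD p q ↔ sltD p q := by
  unfold DecPair ltD leD sltD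
  constructor
  · rintro ⟨h, ⟨h₁, h₂⟩, -⟩
    exact ⟨h₁.lt_of_ne fun e => by simp [e] at h, h₂.lt_of_ne fun e => by simp [e] at h⟩
  · rintro ⟨h₁, h₂⟩
    exact ⟨mul_neg_of_pos_of_neg (sub_pos.2 h₁) (sub_neg.2 h₂), ⟨h₁.le, h₂.le⟩,
      fun e => h₁.ne (congrArg Prod.fst e)⟩

theorem mem_lineThrough_iff_of_sltD {X : Finset (ℝ × ℝ)} {u v z : ℝ × ℝ} (huv : sltD u v) :
    z ∈ lineThrough X u v ↔ z ∈ X ∧ (leD z u ∨ leD u z) ∧ (leD z v ∨ leD v z) := by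
  rw [mem_lineThrough_iff fun e => huv.1.ne (congrArg Prod.fst e)]
  simp only [Set.uIcc_prod_eq, Set.mem_prod, Set.mem_uIcc, leD]
  unfold sltD at huv
  refine and_congr_right fun _ => ?_
  grind

theorem left_mem_lineThrough {X : Finset (ℝ × ℝ)} {u v : ℝ × ℝ} (hu : u ∈ X) :
    u ∈ lineThrough X u v := by
  simp [lineThrough, hu]

theorem right_mem_lineThrough {X : Finset (ℝ × ℝ)} {u v : ℝ × ℝ} (hv : v ∈ X) :
    v ∈ lineThrough X u v := by
  simp [lineThrough, hv]

theorem redArrow_iff {X : Finset (ℝ × ℝ)} {p q : ℝ × ℝ} :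
    RedArrow X p q ↔ p ∈ X ∧ q ∈ X ∧ sltD p q ∧ ∀ u ∈ X, ∀ v ∈ X, sltD u v →
      lineThrough X u v = lineThrough X p q → leD q v ∧ (q = v → leD u p) := by
  have ltD_or_iff (u v : ℝ × ℝ) : ltD q v ∨ (q = v ∧ leD u p) ↔ leD q v ∧ (q = v → leD u p) := by
    by_cases h : q = v
    · simp [h, ltD, leD]
    · simp [h, ltD]
  simp only [RedArrow, ltD_or_iff, ← decPair_and_ltD_iff_sltD, and_imp, and_assoc]
  grind

end StrictOrder

section Reflection

/-- The reflection of the plane in the antidiagonal `y = -x`. It preserves `rho` and `≤_D` while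
exchanging vertical with horizontal lines. -/
def antidiag : ℝ × ℝ ≃ ℝ × ℝ := (Equiv.prodComm ℝ ℝ).trans (Equiv.neg (ℝ × ℝ))

@[simp]
theorem antidiag_fst (p : ℝ × ℝ) : (antidiag p).1 = -p.2 := rfl

@[simp]
theorem antidiag_snd (p : ℝ × ℝ) : (antidiag p).2 = -p.1 := rfl

@[simp]
theorem rho_antidiag (p q : ℝ × ℝ) : rho (antidiag p) (antidiag q) = rho p q := by
  simp only [rho, antidiag_fst, antidiag_snd, neg_sub_neg]
  rw [add_comm, abs_sub_comm q.1, abs_sub_comm q.2]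

@[simp]
theorem leD_antidiag {p q : ℝ × ℝ} : leD (antidiag p) (antidiag q) ↔ leD p q := by
  simp [leD, and_comm]

@[simp]
theorem sltD_antidiag {p q : ℝ × ℝ} : sltD (antidiag p) (antidiag q) ↔ sltD p q := by
  simp [sltD, and_comm]

@[simp]
theorem lineThrough_map_antidiag (X : Finset (ℝ × ℝ)) (u v : ℝ × ℝ) :
    lineThrough (X.map antidiag.toEmbedding) (antidiag u) (antidiag v) =
      (lineThrough X u v).map antidiag.toEmbedding := by
  ext z
  obtain ⟨z, rfl⟩ := antidiag.surjective z
  simp only [lineThrough, Finset.mem_filter, Finset.mem_map_equiv, Equiv.symm_apply_apply]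
  simp [MBtw]

theorem NonCollinear.map_antidiag {X : Finset (ℝ × ℝ)} (hX : NonCollinear X) :
    NonCollinear (X.map antidiag.toEmbedding) := by
  simp only [NonCollinear, Finset.forall_mem_map]
  simpa [-Prod.forall, NonCollinear] using hX

@[simp]
theorem redArrow_map_antidiag {X : Finset (ℝ × ℝ)} {p q : ℝ × ℝ} :
    RedArrow (X.map antidiag.toEmbedding) (antidiag p) (antidiag q) ↔ RedArrow X p q := by
  simp only [redArrow_iff, Finset.forall_mem_map]
  simp [-Prod.forall]

end Reflection

theorem NonCollinear.exists_snd_mem_Ioo {X : Finset (ℝ × ℝ)} (hX : NonCollinear X) {u v : ℝ × ℝ}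
    (hu : u ∈ X) (hv : v ∈ X) (huv : u.1 = v.1) (hlt : v.2 < u.2) :
    ∃ z ∈ X, z.2 ∈ Set.Ioo v.2 u.2 ∧ z.1 ≠ u.1 := by
  have hne : u ≠ v := fun e => hlt.ne' (congrArg Prod.snd e)
  by_contra! hon
  refine hX u hu v hv hne (Finset.ext fun z => ?_)
  rw [mem_lineThrough_iff hne]
  simp only [Set.uIcc_prod_eq, Set.mem_prod, Set.mem_uIcc, Set.mem_Ioo] at hon ⊢
  have := hon z
  grind

theorem NonCollinear.exists_fst_mem_Ioo {X : Finset (ℝ × ℝ)} (hX : NonCollinear X) {u v : ℝ × ℝ}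
    (hu : u ∈ X) (hv : v ∈ X) (huv : u.2 = v.2) (hlt : u.1 < v.1) :
    ∃ z ∈ X, z.1 ∈ Set.Ioo u.1 v.1 ∧ z.2 ≠ u.2 := by
  obtain ⟨z, hz, hz₁, hz₂⟩ := hX.map_antidiag.exists_snd_mem_Ioo (u := antidiag u)
    (v := antidiag v) (by simpa using hu) (by simpa using hv) (by simpa using huv)
    (by simpa using hlt)
  obtain ⟨z, rfl⟩ := antidiag.surjective z
  exact ⟨z, by simpa using hz, by simpa [and_comm] using hz₁, by simpa using hz₂⟩

theorem exists_leD_maximal {S : Finset (ℝ × ℝ)} (hS : S.Nonempty) :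
    ∃ q ∈ S, ∀ z ∈ S, leD q z → z = q := by
  obtain ⟨q, hq, hmax⟩ := S.exists_max_image (fun z => z.1 - z.2) hS
  refine ⟨q, hq, fun z hz hqz => Prod.ext ?_ ?_⟩ <;> linarith [hmax z hz, hqz.1, hqz.2]

theorem IncPair.ne {p q : ℝ × ℝ} (h : IncPair p q) : p ≠ q := by
  rintro rfl
  simp [IncPair] at h

section EmptyCorner

/-- The configuration around an arrow `(r, s)` whose bounding rectangle has its upper right corner
`a = (s.1, r.2)` in `X`: the second quadrant of `a`, the rectangle without its top and right sides,
and the part of the strip between `s` and `a` to the right of them are all empty. -/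
structure IsEmptyCorner (X : Finset (ℝ × ℝ)) (r s : ℝ × ℝ) : Prop where
  mem : (s.1, r.2) ∈ X
  quadrant_empty : ∀ z ∈ X, ¬sltD z (s.1, r.2)
  rectangle_empty : ∀ z ∈ X, ¬(r.1 ≤ z.1 ∧ z.1 < s.1 ∧ s.2 ≤ z.2 ∧ z.2 < r.2)
  strip_empty : ∀ z ∈ X, ¬(s.1 < z.1 ∧ s.2 < z.2 ∧ z.2 < r.2)

variable {X : Finset (ℝ × ℝ)} {r s : ℝ × ℝ}

theorem IsEmptyCorner.exists_mem_below (h : IsEmptyCorner X r s) (hX : NonCollinear X) (hr : r ∈ X)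
    (hrs : r.1 < s.1) : ∃ b ∈ X, b.1 ∈ Set.Ioo r.1 s.1 ∧ b.2 < s.2 := by
  obtain ⟨b, hb, hb₁, hb₂⟩ := hX.exists_fst_mem_Ioo hr h.mem rfl hrs
  have hbr : b.2 < r.2 := (not_lt.1 fun hlt => h.quadrant_empty b hb ⟨hb₁.2, hlt⟩).lt_of_ne hb₂
  exact ⟨b, hb, hb₁, not_le.1 fun hle => h.rectangle_empty b hb ⟨hb₁.1.le, hb₁.2, hle, hbr⟩⟩

theorem IsEmptyCorner.exists_mem_left (h : IsEmptyCorner X r s) (hX : NonCollinear X) (hs : s ∈ X)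
    (hrs : s.2 < r.2) : ∃ p ∈ X, p.1 < r.1 ∧ p.2 ∈ Set.Ioo s.2 r.2 := by
  obtain ⟨p, hp, hp₂, hp₁⟩ := hX.exists_snd_mem_Ioo h.mem hs rfl hrs
  have hps : p.1 < s.1 := (not_lt.1 fun hlt => h.strip_empty p hp ⟨hlt, hp₂⟩).lt_of_ne hp₁
  exact ⟨p, hp, not_le.1 fun hle => h.rectangle_empty p hp ⟨hle, hps, hp₂.1.le, hp₂.2⟩, hp₂⟩

theorem IsEmptyCorner.lineThrough_eq (h : IsEmptyCorner X r s) (hrs : r.1 < s.1) {t : ℝ × ℝ}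
    (hts : t.1 = s.1) (ht : t.2 ∈ Set.Ioo s.2 r.2) : lineThrough X r t = lineThrough X r s := by
  obtain ⟨ht₁, ht₂⟩ := ht
  ext z
  rw [mem_lineThrough_iff_of_sltD ⟨hts ▸ hrs, ht₂⟩,
    mem_lineThrough_iff_of_sltD ⟨hrs, ht₁.trans ht₂⟩]
  refine and_congr_right fun hz => ?_
  -- A point comparable with just one of `s` and `t` has height between theirs, and so does not lie
  -- in the second quadrant of `r`.
  have := h.rectangle_empty z hz
  have := h.strip_empty z hz
  unfold leD
  grind

theorem IsEmptyCorner.le_snd_of_fst_eq (h : IsEmptyCorner X r s) (hrs : RedArrow X r s)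
    {t : ℝ × ℝ} (ht : t ∈ X) (hts : t.1 = s.1) (hst : s.2 < t.2) : r.2 ≤ t.2 := by
  obtain ⟨hr, -, hslt, hmin⟩ := redArrow_iff.1 hrs
  by_contra! htr
  have hle := (hmin r hr t ht ⟨hts ▸ hslt.1, htr⟩ (h.lineThrough_eq hslt.1 hts ⟨hst, htr⟩)).1
  exact hle.2.not_gt hst

theorem IsEmptyCorner.leD_of_lineThrough_eq (h : IsEmptyCorner X r s) (hX : NonCollinear X)
    (hrs : RedArrow X r s) {q u t : ℝ × ℝ} (hqr : q.1 < r.1) (hq₂ : q.2 ∈ Set.Ioo s.2 r.2)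
    (hu : u ∈ X) (ht : t ∈ X) (hut : sltD u t) (hline : lineThrough X u t = lineThrough X q s) :
    leD s t := by
  obtain ⟨hr, -, hslt, -⟩ := redArrow_iff.1 hrs
  have hqs : sltD q s := ⟨hqr.trans hslt.1, hq₂.1⟩
  obtain ⟨-, htq, hts⟩ := (mem_lineThrough_iff_of_sltD hqs).1 (hline ▸ right_mem_lineThrough ht)
  by_contra hst
  have hle : leD t s := hts.resolve_right hst
  have hts₁ : t.1 < s.1 := by
    refine hle.1.lt_of_ne fun e => ?_
    have hrt := h.le_snd_of_fst_eq hrs ht e (not_le.1 fun hle₂ => hst ⟨e.ge, hle₂⟩)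
    rcases htq with htq | hqt
    · exact (htq.1.trans_lt hqs.1).ne e
    · exact (hqt.2.trans_lt hq₂.2).not_ge hrt
  have htr₂ : t.2 < r.2 := not_le.1 fun hrt =>
    h.quadrant_empty u hu ⟨hut.1.trans hts₁, hrt.trans_lt hut.2⟩
  have htr₁ : t.1 < r.1 := not_le.1 fun hrt => h.rectangle_empty t ht ⟨hrt, hts₁, hle.2, htr₂⟩
  obtain ⟨b, hb, hb₁, hb₂⟩ := h.exists_mem_below hX hr hslt.1
  have htb : sltD t b := ⟨htr₁.trans hb₁.1, hb₂.trans_le hle.2⟩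
  have hb_mem : b ∈ lineThrough X u t := (mem_lineThrough_iff_of_sltD hut).2
    ⟨hb, .inr ⟨(hut.1.trans htb.1).le, (htb.2.trans hut.2).le⟩, .inr ⟨htb.1.le, htb.2.le⟩⟩
  obtain ⟨-, -, hbs | hsb⟩ := (mem_lineThrough_iff_of_sltD hqs).1 (hline ▸ hb_mem)
  · exact hb₂.not_ge hbs.2
  · exact hb₁.2.not_ge hsb.1

theorem IsEmptyCorner.exists_redArrow (h : IsEmptyCorner X r s) (hX : NonCollinear X)
    (hrs : RedArrow X r s) : ∃ r' ∈ X, r'.1 < r.1 ∧ r'.2 < r.2 ∧ RedArrow X r' s := by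
  obtain ⟨-, hs, hslt, -⟩ := redArrow_iff.1 hrs
  obtain ⟨p, hp, hpr, hp₂⟩ := h.exists_mem_left hX hs hslt.2
  obtain ⟨q, hqS, hmax⟩ := exists_leD_maximal
    (S := {z ∈ X | z.1 < r.1 ∧ z.2 ∈ Set.Ioo s.2 r.2}) ⟨p, Finset.mem_filter.2 ⟨hp, hpr, hp₂⟩⟩
  obtain ⟨hq, hqr, hq₂⟩ := Finset.mem_filter.1 hqS
  have hqs : sltD q s := ⟨hqr.trans hslt.1, hq₂.1⟩
  refine ⟨q, hq, hqr, hq₂.2, redArrow_iff.2 ⟨hq, hs, hqs, fun u hu t ht hut hline =>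
    ⟨h.leD_of_lineThrough_eq hX hrs hqr hq₂ hu ht hut hline, ?_⟩⟩⟩
  rintro rfl
  obtain ⟨-, huq, -⟩ := (mem_lineThrough_iff_of_sltD hqs).1 (hline ▸ left_mem_lineThrough hu)
  refine huq.elim id fun hqu => ?_
  have hu₂ : u.2 < r.2 := hqu.2.trans_lt hq₂.2
  have hur : u.1 < r.1 := not_le.1 fun hle => h.rectangle_empty u hu ⟨hle, hut.1, hut.2.le, hu₂⟩
  have : u = q := hmax u (Finset.mem_filter.2 ⟨hu, hur, hut.2, hu₂⟩) hqu
  exact this ▸ ⟨le_rfl, le_rfl⟩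

end EmptyCorner

section LeastSoutheast

/-- The standing assumptions in the case `d₁ = d₂ = d`: the second quadrant of `a` is empty, and
emptiness of the two strips says that `d` is the `≤_D`-least point of `X` in the fourth quadrant
of `a`. -/
structure IsLeastSoutheast (X : Finset (ℝ × ℝ)) (a d : ℝ × ℝ) : Prop where
  left_mem : a ∈ X
  right_mem : d ∈ X
  lt : sltD a d
  quadrant_empty : ∀ z ∈ X, ¬sltD z a
  least : ∀ z ∈ X, sltD a z → leD d z

variable {X : Finset (ℝ × ℝ)} {a d r s : ℝ × ℝ}

theorem IsLeastSoutheast.map_antidiag (h : IsLeastSoutheast X a d) :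
    IsLeastSoutheast (X.map antidiag.toEmbedding) (antidiag a) (antidiag d) where
  left_mem := by simpa using h.left_mem
  right_mem := by simpa using h.right_mem
  lt := sltD_antidiag.2 h.lt
  quadrant_empty := Finset.forall_mem_map.2 fun z hz => by simpa using h.quadrant_empty z hz
  least := Finset.forall_mem_map.2 fun z hz => by simpa using h.least z hz

theorem IsLeastSoutheast.lineThrough_ne_of_fst_eq (h : IsLeastSoutheast X a d)
    (hX : NonCollinear X) (hr : r ∈ X) (hra : a.1 = r.1) (hr₂ : r.2 < a.2) (hrd : d.2 < r.2) :
    lineThrough X r d ≠ lineThrough X a d := by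
  intro hline
  obtain ⟨z, hz, hz₂, hz₁⟩ := hX.exists_snd_mem_Ioo h.left_mem hr hra hr₂
  have hza : z.1 < a.1 := by
    refine (not_lt.1 fun hlt => ?_).lt_of_ne hz₁
    exact (hrd.trans hz₂.1).not_ge (h.least z hz ⟨hlt, hz₂.2⟩).2
  have hz_mem : z ∈ lineThrough X r d :=
    (mem_lineThrough_iff_of_sltD ⟨hra ▸ h.lt.1, hrd⟩).2 ⟨hz, .inl ⟨hra ▸ hza.le, hz₂.1.le⟩,
      .inl ⟨(hza.trans h.lt.1).le, (hrd.trans hz₂.1).le⟩⟩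
  obtain ⟨-, hle | hle, -⟩ := (mem_lineThrough_iff_of_sltD h.lt).1 (hline ▸ hz_mem)
  · exact hz₂.2.not_ge hle.2
  · exact hza.not_ge hle.1

theorem IsLeastSoutheast.lineThrough_ne (h : IsLeastSoutheast X a d) (hX : NonCollinear X)
    (hr : r ∈ X) (hra : ltD a r) (hrd : sltD r d) :
    lineThrough X r d ≠ lineThrough X a d := by
  obtain ⟨⟨hra₁, hra₂⟩, hne⟩ := hra
  rcases hra₁.eq_or_lt with e₁ | hlt₁
  · exact h.lineThrough_ne_of_fst_eq hX hr e₁ (hra₂.lt_of_ne fun e₂ => hne (Prod.ext e₁ e₂.symm))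
      hrd.2
  · have hra₂' : r.2 = a.2 := hra₂.antisymm <| not_lt.1 fun hlt₂ =>
      hrd.2.not_ge (h.least r hr ⟨hlt₁, hlt₂⟩).2
    intro hline
    refine h.map_antidiag.lineThrough_ne_of_fst_eq hX.map_antidiag (r := antidiag r)
      ?_ ?_ ?_ ?_ ?_
    all_goals simp [hr, hra₂', hlt₁, hrd.1, hline]

theorem IsLeastSoutheast.eq_corner (h : IsLeastSoutheast X a d) (hr : r ∈ X) (hs : s ∈ X)
    (hrs : sltD r s) (hline : lineThrough X r s = lineThrough X a d) (hsd : ltD s d) :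
    a = (s.1, r.2) ∨ a = (r.1, s.2) := by
  obtain ⟨-, hra, -⟩ := (mem_lineThrough_iff_of_sltD h.lt).1 (hline ▸ left_mem_lineThrough hr)
  obtain ⟨-, hsa, -⟩ := (mem_lineThrough_iff_of_sltD h.lt).1 (hline ▸ right_mem_lineThrough hs)
  have has : leD a s := hsa.resolve_left fun hle =>
    h.quadrant_empty r hr ⟨hrs.1.trans_le hle.1, hle.2.trans_lt hrs.2⟩
  have h_side : a.1 = s.1 ∨ a.2 = s.2 := by
    by_contra! hne
    have hds := h.least s hs ⟨has.1.lt_of_ne hne.1, has.2.lt_of_ne hne.2.symm⟩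
    exact hsd.2 (Prod.ext (hsd.1.1.antisymm hds.1) (hds.2.antisymm hsd.1.2))
  rcases h_side with e | e
  · have hra₁ : r.1 < a.1 := e ▸ hrs.1
    have hra : leD r a := hra.resolve_right fun hle => hra₁.not_ge hle.1
    exact .inl (Prod.ext e (hra.2.antisymm (not_lt.1 fun hlt => h.quadrant_empty r hr ⟨hra₁, hlt⟩)))
  · have hra₂ : a.2 < r.2 := e ▸ hrs.2
    have hra : leD r a := hra.resolve_right fun hle => hra₂.not_ge hle.2
    exact .inr (Prod.ext (le_antisymm (not_lt.1 fun hlt => h.quadrant_empty r hr ⟨hlt, hra₂⟩) hra.1)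
      e)

theorem IsLeastSoutheast.isEmptyCorner (h : IsLeastSoutheast X (s.1, r.2) d)
    (hrs : sltD r s) (hline : lineThrough X r s = lineThrough X (s.1, r.2) d)
    (hsd : leD s d) : IsEmptyCorner X r s where
  mem := h.left_mem
  quadrant_empty := h.quadrant_empty
  rectangle_empty z hz := by
    rintro ⟨hrz, hzs, hsz, hzr⟩
    have hz_mem : z ∈ lineThrough X r s :=
      (mem_lineThrough_iff_of_sltD hrs).2 ⟨hz, .inr ⟨hrz, hzr.le⟩, .inl ⟨hzs.le, hsz⟩⟩
    obtain ⟨-, hle | hle, -⟩ := (mem_lineThrough_iff_of_sltD h.lt).1 (hline ▸ hz_mem)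
    · exact hzr.not_ge hle.2
    · exact hzs.not_ge hle.1
  strip_empty z hz := fun ⟨hsz, hsz₂, hzr⟩ =>
    (hsd.2.trans_lt hsz₂).not_ge (h.least z hz ⟨hsz, hzr⟩).2

theorem IsLeastSoutheast.exists_redArrow_of_eq (h : IsLeastSoutheast X a d) (hX : NonCollinear X)
    (hrs : RedArrow X r s) (hline : lineThrough X r s = lineThrough X a d) (hsd : leD s d)
    (ha : a = (s.1, r.2)) : ∃ r' ∈ X, r'.1 < r.1 ∧ r'.2 < r.2 ∧ RedArrow X r' s := by
  subst ha
  exact (h.isEmptyCorner (redArrow_iff.1 hrs).2.2.1 hline hsd).exists_redArrow hX hrs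

theorem IsLeastSoutheast.exists_redArrow (h : IsLeastSoutheast X a d) (hX : NonCollinear X)
    (hrs : RedArrow X r s) (hline : lineThrough X r s = lineThrough X a d) (hsd : ltD s d) :
    ∃ r' ∈ X, IncPair r r' ∧ RedArrow X r' s := by
  obtain ⟨hr, hs, hslt, -⟩ := redArrow_iff.1 hrs
  rcases h.eq_corner hr hs hslt hline hsd with ha | ha
  · obtain ⟨r', hr', h₁, h₂, hr's⟩ := h.exists_redArrow_of_eq hX hrs hline hsd.1 ha
    exact ⟨r', hr', mul_pos_of_neg_of_neg (sub_neg.2 h₁) (sub_neg.2 h₂), hr's⟩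
  · obtain ⟨r', hr', h₁, h₂, hr's⟩ := h.map_antidiag.exists_redArrow_of_eq hX.map_antidiag
      (redArrow_map_antidiag.2 hrs) (by simpa using hline) (leD_antidiag.2 hsd.1)
      (by simp [ha, Prod.ext_iff])
    obtain ⟨r', rfl⟩ := antidiag.surjective r'
    simp only [antidiag_fst, antidiag_snd, neg_lt_neg_iff] at h₁ h₂
    exact ⟨r', by simpa using hr', mul_pos (sub_pos.2 h₂) (sub_pos.2 h₁),
      redArrow_map_antidiag.1 hr's⟩

end LeastSoutheast

theorem second_red_arrow_one_d_general {X : Finset (ℝ × ℝ)} {a d r s : ℝ × ℝ}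
    (hX : NonCollinear X) (had : IsLeastSoutheast X a d) (har : a ≠ r) (hrs : RedArrow X r s)
    (hline : lineThrough X r s = lineThrough X a d) :
    ∃ r' ∈ X, r' ≠ r ∧ IncPair r r' ∧ RedArrow X r' s := by
  obtain ⟨hr, -, hslt, hmin⟩ := redArrow_iff.1 hrs
  obtain ⟨hsd, har_le⟩ := hmin a had.left_mem d had.right_mem had.lt hline.symm
  have hsd_ne : s ≠ d := by
    rintro rfl
    exact had.lineThrough_ne hX hr ⟨har_le rfl, har⟩ hslt hline
  obtain ⟨r', hr', hinc, hr's⟩ := had.exists_redArrow hX hrs hline ⟨hsd, hsd_ne⟩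
  exact ⟨r', hr', hinc.ne.symm, hinc, hr's⟩

/-- Under the Assumptions with `d₁ = d₂`, if `(r,s)` is the red arrow for the
line `⟨a,d₁⟩`, then there is another red arrow `(r',s)` with `r' ≠ r` and
`{r,r'}` an increasing pair. -/
theorem second_red_arrow_one_d (X : Finset (ℝ × ℝ)) (a d₁ d₂ r s : ℝ × ℝ)
    (hnc : NonCollinear X) (haX : a ∈ X) (hiso : NotEndpoint X a)
    (hQ2 : ∀ z ∈ X, ¬(z.1 < a.1 ∧ a.2 < z.2))
    (hQ4 : ∃ z ∈ X, a.1 < z.1 ∧ z.2 < a.2)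
    (hd1X : d₁ ∈ X) (hd1 : a.1 < d₁.1 ∧ d₁.2 < a.2)
    (hd1strip : ∀ z ∈ X, ¬(a.1 < z.1 ∧ d₁.2 < z.2 ∧ z.2 < a.2))
    (hd1seg : ∀ z ∈ X, ¬(a.1 < z.1 ∧ z.1 < d₁.1 ∧ z.2 = d₁.2))
    (hd2X : d₂ ∈ X) (hd2 : a.1 < d₂.1 ∧ d₂.2 < a.2)
    (hd2strip : ∀ z ∈ X, ¬(a.1 < z.1 ∧ z.1 < d₂.1 ∧ z.2 < a.2))
    (hd2seg : ∀ z ∈ X, ¬(z.1 = d₂.1 ∧ d₂.2 < z.2 ∧ z.2 < a.2))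
    (hdd : d₁ = d₂)
    (hrs : RedArrow X r s) (hline : lineThrough X r s = lineThrough X a d₁) :
    ∃ r' ∈ X, r' ≠ r ∧ IncPair r r' ∧ RedArrow X r' s := by
  subst hdd
  have had : IsLeastSoutheast X a d₁ := ⟨haX, hd1X, hd1, hQ2, fun z hz ⟨hz₁, hz₂⟩ =>
    ⟨not_lt.1 fun h => hd2strip z hz ⟨hz₁, h, hz₂⟩, not_lt.1 fun h => hd1strip z hz ⟨hz₁, h, hz₂⟩⟩⟩
  exact second_red_arrow_one_d_general hnc had (hiso r s (.inr hrs)).1 hrs hline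
end
end

section
/- Let X be a finite set of points in ℝ² with the L1 metric. Let (a₁,b₁) and (a₂,b₂) be blue arrows and (c₁,d₁), (c₂,d₂) be red arrows such that ⟨a₁,b₁⟩ = ⟨c₁,d₁⟩, ⟨a₂,b₂⟩ = ⟨c₂,d₂⟩, and ⟨a₁,b₁⟩ ≠ ⟨a₂,b₂⟩. Then {a₁,a₂} and {b₁,b₂} are decreasing pairs, while {c₁,c₂} and {d₁,d₂} are increasing pairs. -/
noncomputable section
open Classical

/-!
A point on the line of an increasing pair is `≤_I`-comparable to both of its ends, and a point on
the line of a decreasing pair is `≤_D`-comparable to both of its ends; being comparable in both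
orders means sharing a coordinate. So if `(a, b)` and `(c, d)` induce the same line, each of `c, d`
shares a coordinate with each of `a, b`, and `a, b, c, d` are the four corners of a box. A point
of `X` in the closed outer quadrant at one corner lies on the line, hence is comparable, in the
other order, to the two adjacent corners, which forces it to be that corner. Applying this
emptiness to the corners of two distinct boxes shows that one is strictly wider and the other
strictly taller.
-/

section ExposedBox

variable {α β : Type*} [LinearOrder α] [LinearOrder β] {X : Set (α × β)}
  {l l₁ r₁ l₂ r₂ : α} {s₁ t₁ s₂ t₂ : β}

/-- The box with corners `(l, s)`, `(r, t)`, `(l, t)`, `(r, s)` is exposed in `X`: its corners lie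
in `X` and no other point of `X` lies in the closed outer quadrant at a corner. The inequalities
`l < r` and `s < t` are not part of the notion. -/
structure IsExposedBox (X : Set (α × β)) (l r : α) (s t : β) : Prop where
  bottom_left_mem : (l, s) ∈ X
  top_right_mem : (r, t) ∈ X
  top_left_mem : (l, t) ∈ X
  bottom_right_mem : (r, s) ∈ X
  eq_bottom_left : ∀ x y, (x, y) ∈ X → x ≤ l → y ≤ s → x = l ∧ y = s
  eq_top_right : ∀ x y, (x, y) ∈ X → r ≤ x → t ≤ y → x = r ∧ y = t
  eq_top_left : ∀ x y, (x, y) ∈ X → x ≤ l → t ≤ y → x = l ∧ y = t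
  eq_bottom_right : ∀ x y, (x, y) ∈ X → r ≤ x → y ≤ s → x = r ∧ y = s

lemma IsExposedBox.eq_of_left_eq (h₁ : IsExposedBox X l r₁ s₁ t₁)
    (h₂ : IsExposedBox X l r₂ s₂ t₂) : r₁ = r₂ ∧ s₁ = s₂ ∧ t₁ = t₂ := by
  have hs : s₁ = s₂ := (le_total s₁ s₂).elim
    (fun h ↦ (h₂.eq_bottom_left _ _ h₁.bottom_left_mem le_rfl h).2)
    (fun h ↦ (h₁.eq_bottom_left _ _ h₂.bottom_left_mem le_rfl h).2.symm)
  have ht : t₁ = t₂ := (le_total t₁ t₂).elim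
    (fun h ↦ (h₁.eq_top_left _ _ h₂.top_left_mem le_rfl h).2.symm)
    (fun h ↦ (h₂.eq_top_left _ _ h₁.top_left_mem le_rfl h).2)
  have hr : r₁ = r₂ := (le_total r₁ r₂).elim
    (fun h ↦ (h₁.eq_top_right _ _ h₂.top_right_mem h ht.le).1.symm)
    (fun h ↦ (h₂.eq_top_right _ _ h₁.top_right_mem h ht.ge).1)
  exact ⟨hr, hs, ht⟩

lemma IsExposedBox.crosses_of_left_lt (h₁ : IsExposedBox X l₁ r₁ s₁ t₁)
    (h₂ : IsExposedBox X l₂ r₂ s₂ t₂) (hl : l₁ < l₂) : r₂ < r₁ ∧ s₂ < s₁ ∧ t₁ < t₂ := by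
  have hs : s₂ < s₁ := lt_of_not_ge fun h ↦
    hl.ne (h₂.eq_bottom_left _ _ h₁.bottom_left_mem hl.le h).1
  have ht : t₁ < t₂ := lt_of_not_ge fun h ↦
    hl.ne (h₂.eq_top_left _ _ h₁.top_left_mem hl.le h).1
  have hr : r₂ < r₁ := lt_of_not_ge fun h ↦
    hs.ne (h₁.eq_bottom_right _ _ h₂.bottom_right_mem h hs.le).2
  exact ⟨hr, hs, ht⟩

end ExposedBox

section Pairs

variable {u v : ℝ × ℝ}

lemma IncPair.symm (h : IncPair u v) : IncPair v u := by
  unfold IncPair at *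
  linarith

lemma DecPair.symm (h : DecPair u v) : DecPair v u := by
  unfold DecPair at *
  linarith

lemma incPair_of_lt (h₁ : u.1 < v.1) (h₂ : u.2 < v.2) : IncPair u v :=
  mul_pos (sub_pos.2 h₁) (sub_pos.2 h₂)

lemma decPair_of_lt (h₁ : u.1 < v.1) (h₂ : v.2 < u.2) : DecPair u v :=
  mul_neg_of_pos_of_neg (sub_pos.2 h₁) (sub_neg.2 h₂)

lemma IncPair.lt_of_leI (h : IncPair u v) (hle : leI u v) : u.1 < v.1 ∧ u.2 < v.2 :=
  ⟨hle.1.lt_of_ne fun e ↦ by simp [IncPair, e] at h,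
    hle.2.lt_of_ne fun e ↦ by simp [IncPair, e] at h⟩

lemma DecPair.lt_of_leD (h : DecPair u v) (hle : leD u v) : u.1 < v.1 ∧ v.2 < u.2 :=
  ⟨hle.1.lt_of_ne fun e ↦ by simp [DecPair, e] at h,
    hle.2.lt_of_ne fun e ↦ by simp [DecPair, e] at h⟩

lemma fst_eq_or_snd_eq_of_leI_of_leD (hI : leI u v ∨ leI v u) (hD : leD u v ∨ leD v u) :
    u.1 = v.1 ∨ u.2 = v.2 := by
  unfold leI leD at *
  grind

lemma eq_corner_of_fst_eq_or_snd_eq {α β : Type*} {p q w : α × β} (h₁ : p.1 ≠ q.1)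
    (h₂ : p.2 ≠ q.2) (hp : w.1 = p.1 ∨ w.2 = p.2) (hq : w.1 = q.1 ∨ w.2 = q.2) :
    w = (p.1, q.2) ∨ w = (q.1, p.2) := by
  grind

end Pairs

section Lines

variable {u v z : ℝ × ℝ}

lemma abs_sub_eq_add_iff_mem_uIcc_s13 {x y w : ℝ} :
    |x - y| = |x - w| + |w - y| ↔ w ∈ Set.uIcc x y := by
  rw [← segment_eq_uIcc, mem_segment_iff_wbtw, ← dist_add_dist_eq_iff, eq_comm]
  rfl

lemma rho_eq_add_iff :
    rho u v = rho u z + rho z v ↔ z.1 ∈ Set.uIcc u.1 v.1 ∧ z.2 ∈ Set.uIcc u.2 v.2 := by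
  have hx := abs_sub_le u.1 z.1 v.1
  have hy := abs_sub_le u.2 z.2 v.2
  rw [← abs_sub_eq_add_iff_mem_uIcc_s13, ← abs_sub_eq_add_iff_mem_uIcc_s13]
  unfold rho
  constructor
  · intro h
    constructor <;> linarith
  · rintro ⟨h₁, h₂⟩
    linarith

/-- The line induced by `u` and `v` in the whole plane, whose trace on a set `X` is the line of
`X` induced by `u` and `v`. Unlike `lineThrough`, it makes sense for infinite `X`. -/
def planeLine (u v : ℝ × ℝ) : Set (ℝ × ℝ) :=
  {z | z = u ∨ z = v ∨ MBtw u z v ∨ MBtw z u v ∨ MBtw u v z}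

lemma coe_lineThrough (X : Finset (ℝ × ℝ)) (u v : ℝ × ℝ) :
    (lineThrough X u v : Set (ℝ × ℝ)) = ↑X ∩ planeLine u v :=
  Finset.coe_filter _ _

lemma left_mem_planeLine (u v : ℝ × ℝ) : u ∈ planeLine u v := Or.inl rfl

lemma right_mem_planeLine (u v : ℝ × ℝ) : v ∈ planeLine u v := Or.inr (Or.inl rfl)

lemma mem_planeLine_iff_rho (huv : u ≠ v) :
    z ∈ planeLine u v ↔
      rho u v = rho u z + rho z v ∨ rho z v = rho z u + rho u v ∨ rho u z = rho u v + rho v z := by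
  have rho_self (w : ℝ × ℝ) : rho w w = 0 := by simp [rho]
  simp only [planeLine, Set.mem_ofPred_eq, MBtw]
  grind

lemma IncPair.mem_planeLine_iff (h : IncPair u v) (hle : leI u v) :
    z ∈ planeLine u v ↔ leI z u ∨ (leI u z ∧ leI z v) ∨ leI v z := by
  obtain ⟨h₁, h₂⟩ := h.lt_of_leI hle
  rw [mem_planeLine_iff_rho (ne_of_apply_ne Prod.fst h₁.ne)]
  simp only [rho_eq_add_iff, Set.mem_uIcc, leI]
  grind

lemma DecPair.mem_planeLine_iff (h : DecPair u v) (hle : leD u v) :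
    z ∈ planeLine u v ↔ leD z u ∨ (leD u z ∧ leD z v) ∨ leD v z := by
  obtain ⟨h₁, h₂⟩ := h.lt_of_leD hle
  rw [mem_planeLine_iff_rho (ne_of_apply_ne Prod.fst h₁.ne)]
  simp only [rho_eq_add_iff, Set.mem_uIcc, leD]
  grind

lemma IncPair.leI_total_of_mem_planeLine (h : IncPair u v) (hle : leI u v)
    (hz : z ∈ planeLine u v) : (leI z u ∨ leI u z) ∧ (leI z v ∨ leI v z) := by
  have := (h.mem_planeLine_iff hle).1 hz
  grind [leI]

lemma DecPair.leD_total_of_mem_planeLine (h : DecPair u v) (hle : leD u v)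
    (hz : z ∈ planeLine u v) : (leD z u ∨ leD u z) ∧ (leD z v ∨ leD v z) := by
  have := (h.mem_planeLine_iff hle).1 hz
  grind [leD]

end Lines

section SameLine

variable {X : Set (ℝ × ℝ)} {a b c d z a₁ b₁ c₁ d₁ a₂ b₂ c₂ d₂ : ℝ × ℝ}

/-- The increasing pair `(a, b)` and the decreasing pair `(c, d)` of points of `X`, each listed
from its smaller to its larger element in the order of its kind, induce the same line of `X`.
This is what remains of a blue and a red arrow with a common line when the extremality of arrows
is dropped and `X` may be infinite. -/
structure InduceSameLine (X : Set (ℝ × ℝ)) (a b c d : ℝ × ℝ) : Prop where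
  a_mem : a ∈ X
  b_mem : b ∈ X
  c_mem : c ∈ X
  d_mem : d ∈ X
  incPair : IncPair a b
  leI_a_b : leI a b
  decPair : DecPair c d
  leD_c_d : leD c d
  line_eq : X ∩ planeLine a b = X ∩ planeLine c d

namespace InduceSameLine

lemma mem_planeLine_iff (h : InduceSameLine X a b c d) (hz : z ∈ X) :
    z ∈ planeLine a b ↔ z ∈ planeLine c d := by
  have := Set.ext_iff.1 h.line_eq z
  simpa only [Set.mem_inter_iff, hz, true_and] using this

lemma leD_total_of_mem_planeLine (h : InduceSameLine X a b c d) (hz : z ∈ X)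
    (hzl : z ∈ planeLine a b) : (leD z c ∨ leD c z) ∧ (leD z d ∨ leD d z) :=
  h.decPair.leD_total_of_mem_planeLine h.leD_c_d ((h.mem_planeLine_iff hz).1 hzl)

lemma leI_total_of_mem_planeLine (h : InduceSameLine X a b c d) (hz : z ∈ X)
    (hzl : z ∈ planeLine c d) : (leI z a ∨ leI a z) ∧ (leI z b ∨ leI b z) :=
  h.incPair.leI_total_of_mem_planeLine h.leI_a_b ((h.mem_planeLine_iff hz).2 hzl)

lemma corners (h : InduceSameLine X a b c d) : c = (a.1, b.2) ∧ d = (b.1, a.2) := by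
  have ha := h.leD_total_of_mem_planeLine h.a_mem (left_mem_planeLine a b)
  have hb := h.leD_total_of_mem_planeLine h.b_mem (right_mem_planeLine a b)
  have hc := h.leI_total_of_mem_planeLine h.c_mem (left_mem_planeLine c d)
  have hd := h.leI_total_of_mem_planeLine h.d_mem (right_mem_planeLine c d)
  have hca : c.1 = a.1 ∨ c.2 = a.2 := fst_eq_or_snd_eq_of_leI_of_leD hc.1 ha.1.symm
  have hcb : c.1 = b.1 ∨ c.2 = b.2 := fst_eq_or_snd_eq_of_leI_of_leD hc.2 hb.1.symm
  have hda : d.1 = a.1 ∨ d.2 = a.2 := fst_eq_or_snd_eq_of_leI_of_leD hd.1 ha.2.symm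
  have hdb : d.1 = b.1 ∨ d.2 = b.2 := fst_eq_or_snd_eq_of_leI_of_leD hd.2 hb.2.symm
  obtain ⟨hab₁, hab₂⟩ := h.incPair.lt_of_leI h.leI_a_b
  obtain ⟨hcd₁, hcd₂⟩ := h.decPair.lt_of_leD h.leD_c_d
  rcases eq_corner_of_fst_eq_or_snd_eq hab₁.ne hab₂.ne hca hcb with hc | hc <;>
    rcases eq_corner_of_fst_eq_or_snd_eq hab₁.ne hab₂.ne hda hdb with hd | hd <;>
    subst hc hd
  · exact (hcd₁.ne rfl).elim
  · exact ⟨rfl, rfl⟩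
  · exact (hcd₁.not_gt hab₁).elim
  · exact (hcd₁.ne rfl).elim

lemma isExposedBox (h : InduceSameLine X a b c d) : IsExposedBox X a.1 b.1 a.2 b.2 := by
  obtain ⟨rfl, rfl⟩ := h.corners
  obtain ⟨hab₁, hab₂⟩ := h.incPair.lt_of_leI h.leI_a_b
  have leD_total {x y : ℝ} (hz : (x, y) ∈ X) (hq : leI (x, y) a ∨ leI b (x, y)) :=
    h.leD_total_of_mem_planeLine hz
      ((h.incPair.mem_planeLine_iff h.leI_a_b).2 (hq.imp_right Or.inr))
  have leI_total {x y : ℝ} (hz : (x, y) ∈ X)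
      (hq : leD (x, y) (a.1, b.2) ∨ leD (b.1, a.2) (x, y)) :=
    h.leI_total_of_mem_planeLine hz
      ((h.decPair.mem_planeLine_iff h.leD_c_d).2 (hq.imp_right Or.inr))
  refine ⟨h.a_mem, h.b_mem, h.c_mem, h.d_mem, fun x y hz hx hy ↦ ?_, fun x y hz hx hy ↦ ?_,
    fun x y hz hx hy ↦ ?_, fun x y hz hx hy ↦ ?_⟩
  · have := leD_total hz (Or.inl ⟨hx, hy⟩)
    grind [leD]
  · have := leD_total hz (Or.inr ⟨hx, hy⟩)
    grind [leD]
  · have := leI_total hz (Or.inl ⟨hx, hy⟩)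
    grind [leI]
  · have := leI_total hz (Or.inr ⟨hx, hy⟩)
    grind [leI]

lemma pairs_of_fst_lt (h₁ : InduceSameLine X a₁ b₁ c₁ d₁) (h₂ : InduceSameLine X a₂ b₂ c₂ d₂)
    (hlt : a₁.1 < a₂.1) :
    DecPair a₁ a₂ ∧ DecPair b₁ b₂ ∧ IncPair c₁ c₂ ∧ IncPair d₁ d₂ := by
  obtain ⟨hr, hs, ht⟩ := h₁.isExposedBox.crosses_of_left_lt h₂.isExposedBox hlt
  obtain ⟨rfl, rfl⟩ := h₁.corners
  obtain ⟨rfl, rfl⟩ := h₂.corners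
  exact ⟨decPair_of_lt hlt hs, (decPair_of_lt hr ht).symm, incPair_of_lt hlt ht,
    IncPair.symm (incPair_of_lt hr hs)⟩

lemma eq_of_fst_eq (h₁ : InduceSameLine X a₁ b₁ c₁ d₁) (h₂ : InduceSameLine X a₂ b₂ c₂ d₂)
    (heq : a₁.1 = a₂.1) : (a₁, b₁) = (a₂, b₂) := by
  have box₁ := h₁.isExposedBox
  rw [heq] at box₁
  obtain ⟨hr, hs, ht⟩ := box₁.eq_of_left_eq h₂.isExposedBox
  exact Prod.ext (Prod.ext heq hs) (Prod.ext hr ht)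

end InduceSameLine

end SameLine

lemma BlueArrow.induceSameLine {X : Finset (ℝ × ℝ)} {a b c d : ℝ × ℝ} (hb : BlueArrow X a b)
    (hr : RedArrow X c d) (hl : lineThrough X a b = lineThrough X c d) :
    InduceSameLine (X : Set (ℝ × ℝ)) a b c d := by
  obtain ⟨ha_mem, hb_mem, hinc, hltI, -⟩ := hb
  obtain ⟨hc_mem, hd_mem, hdec, hltD, -⟩ := hr
  have line_eq := congrArg (fun Y : Finset (ℝ × ℝ) ↦ (Y : Set (ℝ × ℝ))) hl
  simp only [coe_lineThrough] at line_eq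
  exact ⟨ha_mem, hb_mem, hc_mem, hd_mem, hinc, hltI.1, hdec, hltD.1, line_eq⟩

theorem nested_rectangles_general {X : Set (ℝ × ℝ)} {a₁ b₁ a₂ b₂ c₁ d₁ c₂ d₂ : ℝ × ℝ}
    (h₁ : InduceSameLine X a₁ b₁ c₁ d₁) (h₂ : InduceSameLine X a₂ b₂ c₂ d₂)
    (hne : (a₁, b₁) ≠ (a₂, b₂)) :
    DecPair a₁ a₂ ∧ DecPair b₁ b₂ ∧ IncPair c₁ c₂ ∧ IncPair d₁ d₂ := by
  rcases lt_trichotomy a₁.1 a₂.1 with hlt | heq | hgt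
  · exact h₁.pairs_of_fst_lt h₂ hlt
  · exact absurd (h₁.eq_of_fst_eq h₂ heq) hne
  · obtain ⟨ha, hb, hc, hd⟩ := h₂.pairs_of_fst_lt h₁ hgt
    exact ⟨ha.symm, hb.symm, hc.symm, hd.symm⟩

/-- If blue arrows `(a₁,b₁)`, `(a₂,b₂)` and red arrows `(c₁,d₁)`, `(c₂,d₂)`
satisfy `⟨a₁,b₁⟩ = ⟨c₁,d₁⟩`, `⟨a₂,b₂⟩ = ⟨c₂,d₂⟩` and `⟨a₁,b₁⟩ ≠ ⟨a₂,b₂⟩`, then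
the two rectangles intersect in their middle parts: `{a₁,a₂}` and `{b₁,b₂}` are
decreasing pairs, while `{c₁,c₂}` and `{d₁,d₂}` are increasing pairs. -/
theorem nested_rectangles (X : Finset (ℝ × ℝ)) (a₁ b₁ a₂ b₂ c₁ d₁ c₂ d₂ : ℝ × ℝ)
    (h₁ : BlueArrow X a₁ b₁) (h₂ : BlueArrow X a₂ b₂)
    (h₃ : RedArrow X c₁ d₁) (h₄ : RedArrow X c₂ d₂)
    (hl₁ : lineThrough X a₁ b₁ = lineThrough X c₁ d₁)
    (hl₂ : lineThrough X a₂ b₂ = lineThrough X c₂ d₂)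
    (hne : lineThrough X a₁ b₁ ≠ lineThrough X a₂ b₂) :
    DecPair a₁ a₂ ∧ DecPair b₁ b₂ ∧ IncPair c₁ c₂ ∧ IncPair d₁ d₂ :=
  nested_rectangles_general (h₁.induceSameLine h₃ hl₁) (h₂.induceSameLine h₄ hl₂)
    fun h ↦ hne (congrArg (fun p ↦ lineThrough X p.1 p.2) h)
end
end

section
/- Let X be a finite set of points in ℝ² with the L1 metric, and let a ∈ X be a point whose first, second and fourth quadrants are all empty. If b ∈ X satisfies either x(b) = x(a) and y(b) > y(a), or y(b) = y(a) and x(b) > x(a), then the line ⟨a,b⟩ equals X. -/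
noncomputable section
open Classical

/-!
A point of the box `[[u, v]]` splits `ρ(u, v)` exactly, coordinate by coordinate, so three distinct
points lie on a common line as soon as one of them is in the box spanned by the other two. If `b` is
straight above `a`, then `a` lies in the box of `b` and every `z` not above the height of `a`; the
remaining points avoid both upper quadrants, hence are on the vertical through `a` and `b`. The
horizontal case is the reflection of the vertical one in the diagonal.
-/

section

open Set Interval

/-- The line through `u` and `v` in the whole plane, so that lines of arbitrary, possibly infinite,
point sets can be discussed: `lineThrough X u v` is its trace on the finite set `X`. -/
def l1Line (u v : ℝ × ℝ) : Set (ℝ × ℝ) :=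
  {z | z = u ∨ z = v ∨ MBtw u z v ∨ MBtw z u v ∨ MBtw u v z}

theorem lineThrough_eq_self_iff {X : Finset (ℝ × ℝ)} {u v : ℝ × ℝ} :
    lineThrough X u v = X ↔ (X : Set (ℝ × ℝ)) ⊆ l1Line u v :=
  Finset.filter_eq_self

theorem rho_swap (u v : ℝ × ℝ) : rho u.swap v.swap = rho u v :=
  add_comm _ _

theorem mBtw_swap_iff {u z v : ℝ × ℝ} : MBtw u.swap z.swap v.swap ↔ MBtw u z v := by
  simp only [MBtw, rho_swap, ne_eq, Prod.swap_inj]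

theorem swap_mem_l1Line_iff {u v z : ℝ × ℝ} :
    z.swap ∈ l1Line u.swap v.swap ↔ z ∈ l1Line u v := by
  simp only [l1Line, mem_ofPred_eq, mBtw_swap_iff, Prod.swap_inj]

theorem rho_eq_add_of_mem_uIcc {u z v : ℝ × ℝ} (hz : z ∈ [[u, v]]) :
    rho u v = rho u z + rho z v := by
  rw [uIcc_prod_eq, mem_prod, ← segment_eq_uIcc, ← segment_eq_uIcc] at hz
  have hfst : |u.1 - z.1| + |z.1 - v.1| = |u.1 - v.1| := dist_add_dist_of_mem_segment hz.1
  have hsnd : |u.2 - z.2| + |z.2 - v.2| = |u.2 - v.2| := dist_add_dist_of_mem_segment hz.2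
  simp only [rho]
  linarith

theorem mem_l1Line_of_mem_uIcc {u v z : ℝ × ℝ} (huv : u ≠ v)
    (h : z ∈ [[u, v]] ∨ u ∈ [[z, v]] ∨ v ∈ [[u, z]]) : z ∈ l1Line u v := by
  by_cases hzu : z = u
  · exact Or.inl hzu
  by_cases hzv : z = v
  · exact Or.inr (Or.inl hzv)
  refine Or.inr (Or.inr ?_)
  exact h.imp (fun hz => ⟨Ne.symm hzu, hzv, huv, rho_eq_add_of_mem_uIcc hz⟩)
    (Or.imp (fun hu => ⟨hzu, huv, hzv, rho_eq_add_of_mem_uIcc hu⟩)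
      (fun hv => ⟨huv, Ne.symm hzv, Ne.symm hzu, rho_eq_add_of_mem_uIcc hv⟩))

theorem mem_l1Line_of_fst_eq {a b z : ℝ × ℝ} (hfst : b.1 = a.1) (hlt : a.2 < b.2)
    (hz : a.2 < z.2 → z.1 = a.1) : z ∈ l1Line a b := by
  apply mem_l1Line_of_mem_uIcc (ne_of_apply_ne Prod.snd hlt.ne)
  simp only [uIcc_prod_eq, mem_prod, hfst]
  rcases le_or_gt z.2 a.2 with hza | haz
  · exact Or.inr (Or.inl ⟨right_mem_uIcc, mem_uIcc_of_le hza hlt.le⟩)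
  rw [hz haz]
  rcases le_total z.2 b.2 with hzb | hbz
  · exact Or.inl ⟨left_mem_uIcc, mem_uIcc_of_le haz.le hzb⟩
  · exact Or.inr (Or.inr ⟨left_mem_uIcc, mem_uIcc_of_le hlt.le hbz⟩)

theorem mem_l1Line_of_snd_eq {a b z : ℝ × ℝ} (hsnd : b.2 = a.2) (hlt : a.1 < b.1)
    (hz : a.1 < z.1 → z.2 = a.2) : z ∈ l1Line a b :=
  swap_mem_l1Line_iff.mp (mem_l1Line_of_fst_eq hsnd hlt hz)

theorem dominant_point_halfline_universal_general {X : Set (ℝ × ℝ)} {a b : ℝ × ℝ}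
    (haQ1 : ∀ z ∈ X, ¬(a.1 < z.1 ∧ a.2 < z.2))
    (hb : (b.1 = a.1 ∧ a.2 < b.2 ∧ ∀ z ∈ X, ¬(z.1 < a.1 ∧ a.2 < z.2)) ∨
      (b.2 = a.2 ∧ a.1 < b.1 ∧ ∀ z ∈ X, ¬(a.1 < z.1 ∧ z.2 < a.2))) :
    X ⊆ l1Line a b := by
  intro z hz
  rcases hb with ⟨hfst, hlt, haQ2⟩ | ⟨hsnd, hlt, haQ4⟩
  · refine mem_l1Line_of_fst_eq hfst hlt fun habove => le_antisymm ?_ ?_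
    · exact not_lt.mp fun hright => haQ1 z hz ⟨hright, habove⟩
    · exact not_lt.mp fun hleft => haQ2 z hz ⟨hleft, habove⟩
  · refine mem_l1Line_of_snd_eq hsnd hlt fun hright => le_antisymm ?_ ?_
    · exact not_lt.mp fun habove => haQ1 z hz ⟨hright, habove⟩
    · exact not_lt.mp fun hbelow => haQ4 z hz ⟨hright, hbelow⟩

end

/-- If `a ∈ X` has its first, second and fourth quadrants all empty, and
`b ∈ X` lies on the open vertical half-line above `a` or the open horizontal
half-line to the right of `a`, then the line `⟨a,b⟩` is universal. -/
theorem dominant_point_halfline_universal (X : Finset (ℝ × ℝ)) (a b : ℝ × ℝ)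
    (haX : a ∈ X) (hbX : b ∈ X)
    (haQ1 : ∀ z ∈ X, ¬(a.1 < z.1 ∧ a.2 < z.2))
    (haQ2 : ∀ z ∈ X, ¬(z.1 < a.1 ∧ a.2 < z.2))
    (haQ4 : ∀ z ∈ X, ¬(a.1 < z.1 ∧ z.2 < a.2))
    (hb : (b.1 = a.1 ∧ a.2 < b.2) ∨ (b.2 = a.2 ∧ a.1 < b.1)) :
    lineThrough X a b = X :=
  lineThrough_eq_self_iff.mpr <| dominant_point_halfline_universal_general haQ1 <|
    hb.imp (fun h => ⟨h.1, h.2, haQ2⟩) (fun h => ⟨h.1, h.2, haQ4⟩)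
end
end
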